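/- (Proposition: reduction at w = 1) With the zero-drift mostly symmetric setup and running assumptions ε = n^{-α}, δ = n^{-β} (1/2 < α < 2β, α + β > 1, 1/3 < β < 1/2), the integrals I_n = (2πi)^{-d} ∫_{N_1} [(1+z_1)···(1+z_{d-1}) / (B(ẑ) · z_1···z_d)] · [(B(ẑ) - z_d^2 A(ẑ)) / (1 - z_d)] · S̄(z)^n dz and J_n = π^{-d} ∫_{(-δ,δ)^d} S̄(e^{iθ_1},…,e^{iθ_d})^n dθ are asymptotically equivalent: I_n / J_n → 1 as n → ∞. -/

import Mathlib

open Finset Filter MeasureTheory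
open scoped Classical Real

noncomputable section

/-- Total weight of walks of length `n` with steps in `S` (weighted by `w`),
starting at the origin and never leaving `ℕ^d`. -/
def walkWeight (d : ℕ) (S : Finset (Fin d → ℤ)) (w : (Fin d → ℤ) → ℝ) (n : ℕ) : ℝ :=
  ∑ f : Fin n → {i // i ∈ S},
    if ∀ m : ℕ, m ≤ n → ∀ j : Fin d,
        0 ≤ ∑ k ∈ Finset.univ.filter (fun k : Fin n => (k : ℕ) < m), ((f k : Fin d → ℤ) j)
    then ∏ k : Fin n, w (f k) else 0

/-- The step set `S` (with weights `w`) is symmetric over the `k`-th coordinate axis. -/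
def SymmetricAxis (d : ℕ) (S : Finset (Fin d → ℤ)) (w : (Fin d → ℤ) → ℝ) (k : Fin d) : Prop :=
  ∀ i ∈ S, Function.update i k (-(i k)) ∈ S ∧ w (Function.update i k (-(i k))) = w i

namespace ZeroDrift

variable (d : ℕ) (S : Finset (Fin (d + 1) → ℤ)) (w : (Fin (d + 1) → ℤ) → ℝ)

/-- `S(1)`, the total weight of the step set. -/
def S1 : ℝ := ∑ i ∈ S, w i

/-- `A(ẑ)`: the Laurent polynomial collecting steps with last coordinate `-1`. -/
def AC (z : Fin (d + 1) → ℂ) : ℂ :=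
  ∑ i ∈ S.filter fun i => i (Fin.last d) = -1,
    (w i : ℂ) * ∏ j : Fin d, z (Fin.castSucc j) ^ (i (Fin.castSucc j))

/-- `B(ẑ)`: the Laurent polynomial collecting steps with last coordinate `1`. -/
def BC (z : Fin (d + 1) → ℂ) : ℂ :=
  ∑ i ∈ S.filter fun i => i (Fin.last d) = 1,
    (w i : ℂ) * ∏ j : Fin d, z (Fin.castSucc j) ^ (i (Fin.castSucc j))

/-- `Q(ẑ)`: the Laurent polynomial collecting steps with last coordinate `0`. -/
def QC (z : Fin (d + 1) → ℂ) : ℂ :=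
  ∑ i ∈ S.filter fun i => i (Fin.last d) = 0,
    (w i : ℂ) * ∏ j : Fin d, z (Fin.castSucc j) ^ (i (Fin.castSucc j))

/-- The characteristic Laurent polynomial `S(z)` evaluated at `z : ℂ^{d+1}`. -/
def SC (z : Fin (d + 1) → ℂ) : ℂ :=
  ∑ i ∈ S, (w i : ℂ) * ∏ j : Fin (d + 1), z j ^ (i j)

/-- `S̄(z) = S(z_1,…,z_{d},1/z_{d+1})` evaluated at `z : ℂ^{d+1}`. -/
def SbarC (z : Fin (d + 1) → ℂ) : ℂ :=
  ∑ i ∈ S, (w i : ℂ) *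
    (∏ j : Fin d, z (Fin.castSucc j) ^ (i (Fin.castSucc j))) *
    z (Fin.last d) ^ (-(i (Fin.last d)))

/-- The numerator `G(z,t)` of the diagonal representation. -/
def GC (z : Fin (d + 1) → ℂ) (t : ℂ) : ℂ :=
  (∏ j : Fin d, (1 + z (Fin.castSucc j))) *
    (1 - t * (∏ j, z j) * (QC d S w z + 2 * z (Fin.last d) * AC d S w z))

/-- The denominator `H(z,t) = H_1 H_2 H_3` of the diagonal representation. -/
def HC (z : Fin (d + 1) → ℂ) (t : ℂ) : ℂ :=
  (1 - z (Fin.last d)) * (1 - t * (∏ j, z j) * SbarC d S w z) *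
    (1 - t * (∏ j, z j) * (QC d S w z + z (Fin.last d) * AC d S w z))

/-- The point of `ℂ^{d+1}` with coordinates `i^{m_j}` encoded by `m : Fin (d+1) → Fin 4`. -/
def wOf (m : Fin (d + 1) → Fin 4) : Fin (d + 1) → ℂ :=
  fun j => Complex.I ^ (m j : ℕ)

/-- The (indices of the) finite set `Γ` of possible contributing points: `w_j ∈ {±1}` for
`j ≤ d`, `w_{d+1} ∈ {±1,±i}`, and `|1/(w_1⋯w_{d+1} S(w))| = 1/S(1)`. -/
def GammaIdx : Finset (Fin (d + 1) → Fin 4) :=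
  Finset.univ.filter fun m =>
    (∀ j : Fin d, m (Fin.castSucc j) = 0 ∨ m (Fin.castSucc j) = 2) ∧
    ‖1 / ((∏ j, wOf d m j) * SC d S w (wOf d m))‖ = 1 / S1 d S w

/-- The argument (angle) of the point encoded by `m` in coordinate `j`. -/
def argOf (m : Fin (d + 1) → Fin 4) (j : Fin (d + 1)) : ℝ := (m j : ℕ) * π / 2

/-- The box of angles parametrizing the product of arcs `N_w` for `w = wOf m`. -/
def box (m : Fin (d + 1) → Fin 4) (δ : ℝ) : Set (Fin (d + 1) → ℝ) :=
  Set.univ.pi fun j => Set.Ioo (argOf d m j - δ) (argOf d m j + δ)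

/-- The parametrization of the torus `|z_j| = 1` (`j ≤ d`), `|z_{d+1}| = 1 - ε`. -/
def zOf (ε : ℝ) (θ : Fin (d + 1) → ℝ) : Fin (d + 1) → ℂ :=
  fun j => (if j = Fin.last d then (1 - ε : ℂ) else 1) * Complex.exp (Complex.I * θ j)

/-- Angles parametrizing `N = ⋃_{w ∈ Γ} N_w`. -/
def Nparam (δ : ℝ) : Set (Fin (d + 1) → ℝ) := ⋃ m ∈ GammaIdx d S w, box d m δ

/-- The contour integral `(2πi)^{-(d+2)} ∫_{N × C} G/H · dz dt/(z_1⋯z_{d+1}t)^{n+1}`,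
parametrized by angles, where `C` is the circle `|t| = r`. -/
def fullIntegral (n : ℕ) (ε δ r : ℝ) : ℂ :=
  (((2 * π) ^ (d + 2) : ℝ))⁻¹ •
    ∫ θ in Nparam d S w δ,
      ∫ φ in Set.Ioo 0 (2 * π),
        GC d S w (zOf d ε θ) ((r : ℂ) * Complex.exp (Complex.I * φ)) /
            HC d S w (zOf d ε θ) ((r : ℂ) * Complex.exp (Complex.I * φ)) *
          (((∏ j, zOf d ε θ j) * ((r : ℂ) * Complex.exp (Complex.I * φ))) ^ n)⁻¹

/-- The residue integrand
`[(1+z_1)⋯(1+z_d)/(B(ẑ) z_1⋯z_{d+1})]·[(B(ẑ) - z_{d+1}^2 A(ẑ))/(1-z_{d+1})]·S̄(z)^n`,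
parametrized by angles, including the Jacobian factors `i z_j` of `dz_j`. -/
def resIntegrand (n : ℕ) (ε : ℝ) (θ : Fin (d + 1) → ℝ) : ℂ :=
  ((∏ j : Fin d, (1 + zOf d ε θ (Fin.castSucc j))) /
      (BC d S w (zOf d ε θ) * ∏ j, zOf d ε θ j)) *
    ((BC d S w (zOf d ε θ) - zOf d ε θ (Fin.last d) ^ 2 * AC d S w (zOf d ε θ)) /
      (1 - zOf d ε θ (Fin.last d))) *
    SbarC d S w (zOf d ε θ) ^ n *
    ∏ j, Complex.I * zOf d ε θ j

/-- The contour integral `∫_{N_w} (residue integrand) dz` over the product of arcs `N_w`,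
`w = wOf m`, parametrized by angles. -/
def resIntegral (n : ℕ) (ε δ : ℝ) (m : Fin (d + 1) → Fin 4) : ℂ :=
  ∫ θ in box d m δ, resIntegrand d S w n ε θ

end ZeroDrift

/-!
Both integrals are taken over the angles in the box `(-δ, δ)^{d+1}`. Symmetry and zero drift
remove the linear term of `S̄` at `1`, so uniformly on the box `S̄(z) = r(θ) + o(1/n)`, where
`r` is the real quadratic Taylor polynomial of `S̄(e^{iθ})`: the errors are `O(ε²)`, `O(εδ)` and
`O(δ³)`. Hence `S̄(z)^n ~ r(θ)^n` uniformly, on the shifted torus as well as on the unit torus.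
The remaining factor of the residue integrand tends to `2^{d+1}` times a power of `i`, because
`B - A = O(δ²) = o(ε)` while `ε = O(1 - z_{d+1})`. As `r^n` has constant sign near `0`, uniform
equivalence passes to the integrals, and both of them are equivalent to a constant times the
integral of `r^n`.
-/

open Asymptotics Topology

section Asymptotics

variable {X : Type*} {l : Filter X}

theorem isEquivalent_pow_of_sub_isLittleO {𝕜 : Type*} [NormedField 𝕜] {f g : X → 𝕜}
    {k : X → ℕ} {c : 𝕜} (hc : c ≠ 0) (hg : Tendsto g l (𝓝 c))
    (hfg : (fun x => f x - g x) =o[l] fun x => (k x : ℝ)⁻¹) :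
    (fun x => f x ^ k x) ~[l] fun x => g x ^ k x := by
  have hrel : Tendsto (fun x => (k x : ℝ) * ‖f x / g x - 1‖) l (𝓝 0) := by
    have hlim := ((hfg.mul_isBigO ((hg.inv₀ hc).isBigO_one ℝ)).norm_left.tendsto_div_nhds_zero)
    refine hlim.congr' ?_
    filter_upwards [hg.eventually_ne hc] with x hx
    rw [div_sub_one hx, div_eq_mul_inv (f x - g x), mul_one, div_inv_eq_mul, mul_comm]
  have hexp : Tendsto (fun x => Real.exp ((k x : ℝ) * ‖f x / g x - 1‖) - 1) l (𝓝 0) := by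
    simpa using ((Real.continuous_exp.tendsto 0).comp hrel).sub_const 1
  refine isEquivalent_of_tendsto_one ?_
  rw [tendsto_iff_norm_sub_tendsto_zero]
  refine squeeze_zero (fun x => norm_nonneg _) (fun x => ?_) hexp
  simpa [div_pow] using
    Finset.norm_prod_one_add_sub_one_le (Finset.range (k x)) fun _ => f x / g x - 1

theorem tendsto_zero_of_sq_tendsto_zero {𝕜 : Type*} [NormedDivisionRing 𝕜] {f : X → 𝕜}
    (h : Tendsto (fun x => f x ^ 2) l (𝓝 0)) : Tendsto f l (𝓝 0) := by
  refine (isLittleO_one_iff ℝ).1 (.of_pow (n := 2) ?_ two_ne_zero)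
  simpa only [Pi.pow_def, one_pow] using (isLittleO_one_iff ℝ).2 h

theorem exp_sub_one_isBigO {v : X → ℂ} (hv : Tendsto v l (𝓝 0)) :
    (fun x => Complex.exp (v x) - 1) =O[l] v := by
  simpa [Function.comp_def] using (Complex.exp_sub_sum_range_isBigO_pow 1).comp_tendsto hv

theorem exp_sub_one_sub_isBigO {v : X → ℂ} (hv : Tendsto v l (𝓝 0)) :
    (fun x => Complex.exp (v x) - (1 + v x)) =O[l] fun x => v x ^ 2 := by
  simpa [Function.comp_def, Finset.sum_range_succ] using
    (Complex.exp_sub_sum_range_isBigO_pow 2).comp_tendsto hv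

theorem exp_sub_taylor_two_isBigO {v : X → ℂ} (hv : Tendsto v l (𝓝 0)) :
    (fun x => Complex.exp (v x) - (1 + v x + v x ^ 2 / 2)) =O[l] fun x => v x ^ 3 := by
  simpa [Function.comp_def, Finset.sum_range_succ] using
    (Complex.exp_sub_sum_range_isBigO_pow 3).comp_tendsto hv

theorem exp_add_sub_isLittleO {u v : X → ℂ} {g : X → ℝ} (hu : Tendsto u l (𝓝 0))
    (hv : Tendsto v l (𝓝 0)) (huu : (fun x => u x ^ 2) =o[l] g)
    (huv : (fun x => u x * v x) =o[l] g) (hvv : (fun x => v x ^ 3) =o[l] g) :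
    (fun x => Complex.exp (u x + v x) - (1 + (u x + v x) + v x ^ 2 / 2)) =o[l] g := by
  have hexp : (fun x => Complex.exp (v x)) =O[l] fun _ => (1 : ℝ) :=
    ((Complex.continuous_exp.tendsto 0).comp hv).isBigO_one ℝ
  have hradial : (fun x => (Complex.exp (u x) - (1 + u x)) * Complex.exp (v x)) =o[l] g := by
    simpa using ((exp_sub_one_sub_isBigO hu).trans_isLittleO huu).mul_isBigO hexp
  have hmixed : (fun x => u x * (Complex.exp (v x) - 1)) =o[l] g :=
    ((isBigO_refl u l).mul (exp_sub_one_isBigO hv)).trans_isLittleO huv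
  have hangular := (exp_sub_taylor_two_isBigO hv).trans_isLittleO hvv
  refine ((hradial.add hmixed).add hangular).congr_left fun x => ?_
  rw [Complex.exp_add]
  ring

variable {ι : Type*} {T : Finset ι} {c : ι → ℂ}

theorem sum_mul_exp_sub_sum_isBigO {v : ι → X → ℂ} {b : X → ℝ} (hb : Tendsto b l (𝓝 0))
    (hv : ∀ i ∈ T, v i =O[l] b) (hlin : ∀ x, ∑ i ∈ T, c i * v i x = 0) :
    (fun x => ∑ i ∈ T, c i * Complex.exp (v i x) - ∑ i ∈ T, c i) =O[l] fun x => b x ^ 2 := by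
  have hterm : ∀ i ∈ T, (fun x => c i * (Complex.exp (v i x) - (1 + v i x))) =O[l]
      fun x => b x ^ 2 := fun i hi =>
    ((exp_sub_one_sub_isBigO ((hv i hi).trans_tendsto hb)).trans ((hv i hi).pow 2)).const_mul_left _
  refine (IsBigO.fun_sum hterm).congr_left fun x => ?_
  simp only [mul_sub, mul_add, mul_one, sum_sub_distrib, sum_add_distrib, hlin, add_zero]

theorem sum_mul_exp_add_sub_isLittleO {u v : ι → X → ℂ} {a b g : X → ℝ}
    (ha : Tendsto a l (𝓝 0)) (hb : Tendsto b l (𝓝 0)) (hu : ∀ i ∈ T, u i =O[l] a)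
    (hv : ∀ i ∈ T, v i =O[l] b) (haa : (fun x => a x ^ 2) =o[l] g)
    (hab : (fun x => a x * b x) =o[l] g) (hbb : (fun x => b x ^ 3) =o[l] g)
    (hlin : ∀ x, ∑ i ∈ T, c i * (u i x + v i x) = 0) :
    (fun x => ∑ i ∈ T, c i * Complex.exp (u i x + v i x) -
      ∑ i ∈ T, c i * (1 + v i x ^ 2 / 2)) =o[l] g := by
  have hterm : ∀ i ∈ T, (fun x => c i *
      (Complex.exp (u i x + v i x) - (1 + (u i x + v i x) + v i x ^ 2 / 2))) =o[l] g :=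
    fun i hi => (exp_add_sub_isLittleO ((hu i hi).trans_tendsto ha) ((hv i hi).trans_tendsto hb)
      (((hu i hi).pow 2).trans_isLittleO haa) (((hu i hi).mul (hv i hi)).trans_isLittleO hab)
      (((hv i hi).pow 3).trans_isLittleO hbb)).const_mul_left _
  refine (IsLittleO.fun_sum hterm).congr_left fun x => ?_
  have hsplit : ∀ i, c i *
      (Complex.exp (u i x + v i x) - (1 + (u i x + v i x) + v i x ^ 2 / 2)) =
      c i * Complex.exp (u i x + v i x) - c i * (1 + v i x ^ 2 / 2) -
        c i * (u i x + v i x) := fun i => by ring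
  simp only [hsplit, sum_sub_distrib, hlin, sub_zero]

theorem natCast_rpow_neg_mul_isLittleO {a b c : ℝ} (h : c < a + b) :
    (fun n : ℕ => (n : ℝ) ^ (-a) * (n : ℝ) ^ (-b)) =o[atTop] fun n : ℕ => (n : ℝ) ^ (-c) := by
  have hdecay : Tendsto (fun n : ℕ => (n : ℝ) ^ (-(a + b - c))) atTop (𝓝 0) :=
    (tendsto_rpow_neg_atTop (by linarith)).comp tendsto_natCast_atTop_atTop
  refine (((isLittleO_one_iff ℝ).2 hdecay).mul_isBigO
    (isBigO_refl (fun n : ℕ => (n : ℝ) ^ (-c)) atTop)).congr' ?_ (by simp)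
  filter_upwards [eventually_gt_atTop 0] with n hn
  have hn' : (0 : ℝ) < n := Nat.cast_pos.2 hn
  rw [← Real.rpow_add hn', ← Real.rpow_add hn']
  congr 1
  ring

end Asymptotics

section UniformConvergence

variable {ι X : Type*} {l : Filter ι} {s : ι → Set X}

/-- Convergence of `(i, x)` along this filter means convergence of `i` along `l`, uniformly in
`x ∈ s i`; it allows uniform asymptotics on moving sets to be written with `~`, `=O` and `=o`. -/
def uniformlyOn (l : Filter ι) (s : ι → Set X) : Filter (ι × X) :=
  comap Prod.fst l ⊓ 𝓟 {x | x.2 ∈ s x.1}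

theorem eventually_uniformlyOn {P : ι × X → Prop} :
    (∀ᶠ x in uniformlyOn l s, P x) ↔ ∀ᶠ i in l, ∀ x ∈ s i, P (i, x) := by
  simp only [uniformlyOn, eventually_inf_principal, eventually_comap, Set.mem_ofPred_eq,
    Prod.forall]
  exact eventually_congr (.of_forall fun i =>
    ⟨fun h x hx => h i x rfl hx, fun h _ x hi hx => by subst hi; exact h x hx⟩)

theorem tendsto_fst_uniformlyOn : Tendsto Prod.fst (uniformlyOn l s) l :=
  tendsto_comap.mono_left inf_le_left

theorem snd_isBigO_uniformlyOn_ball {E : Type*} [SeminormedAddCommGroup E] {r : ι → ℝ} :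
    (Prod.snd : ι × E → E) =O[uniformlyOn l fun i => Metric.ball 0 (r i)] fun x => r x.1 :=
  .of_norm_eventuallyLE <| eventually_uniformlyOn.2 <| .of_forall fun _ _ hx =>
    (mem_ball_zero_iff.1 hx).le

variable {E : Type*} [NormedAddCommGroup E] [NormedSpace ℝ E] [MeasurableSpace X]
  {μ : Measure X}

/- The `O`-hypothesis excludes cancellation in the integral of `g`. -/
theorem isEquivalent_setIntegral {f g : ι → X → E} (hs : ∀ i, MeasurableSet (s i))
    (hf : ∀ i, AEStronglyMeasurable (f i) (μ.restrict (s i)))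
    (hg : ∀ i, IntegrableOn (g i) (s i) μ)
    (hnorm : (fun i => ∫ x in s i, ‖g i x‖ ∂μ) =O[l] fun i => ∫ x in s i, g i x ∂μ)
    (hfg : (fun x => f x.1 x.2) ~[uniformlyOn l s] fun x => g x.1 x.2) :
    (fun i => ∫ x in s i, f i x ∂μ) ~[l] fun i => ∫ x in s i, g i x ∂μ := by
  refine IsLittleO.trans_isBigO (isLittleO_iff.2 fun η hη => ?_) hnorm
  filter_upwards [eventually_uniformlyOn.1 (isLittleO_iff.1 hfg hη)] with i hi
  have hle : ∀ᵐ x ∂μ.restrict (s i), ‖f i x - g i x‖ ≤ η * ‖g i x‖ :=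
    (ae_restrict_iff' (hs i)).2 (.of_forall hi)
  have hbound : Integrable (fun x => η * ‖g i x‖) (μ.restrict (s i)) :=
    (hg i).norm.const_mul η
  have hdiff : IntegrableOn (fun x => f i x - g i x) (s i) μ :=
    hbound.mono' ((hf i).sub (hg i).aestronglyMeasurable) hle
  have hint : IntegrableOn (f i) (s i) μ := by simpa [Pi.add_def] using hdiff.add (hg i)
  calc ‖(∫ x in s i, f i x ∂μ) - ∫ x in s i, g i x ∂μ‖
      = ‖∫ x in s i, (f i x - g i x) ∂μ‖ := by rw [integral_sub hint (hg i)]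
    _ ≤ ∫ x in s i, η * ‖g i x‖ ∂μ := norm_integral_le_of_norm_le hbound hle
    _ = η * ‖∫ x in s i, ‖g i x‖ ∂μ‖ := by
        rw [integral_const_mul, Real.norm_of_nonneg (integral_nonneg fun _ => norm_nonneg _)]

theorem norm_integral_eq_integral_norm_of_eq_norm_smul [CompleteSpace E] {g : X → E} {e : E}
    (he : ‖e‖ = 1) (hg : ∀ᵐ x ∂μ, g x = ‖g x‖ • e) : ‖∫ x, g x ∂μ‖ = ∫ x, ‖g x‖ ∂μ := by
  rw [integral_congr_ae hg, integral_smul_const, norm_smul, he, mul_one,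
    Real.norm_of_nonneg (integral_nonneg fun _ => norm_nonneg _)]

end UniformConvergence

namespace ZeroDrift

variable {d : ℕ} {S : Finset (Fin (d + 1) → ℤ)} {w : (Fin (d + 1) → ℤ) → ℝ}

section Parametrization

/-- The argument of the monomial in the first `d` variables of the step `i`, at `e^{iθ}`. -/
def phaseHat (d : ℕ) (i : Fin (d + 1) → ℤ) (θ : Fin (d + 1) → ℝ) : ℝ :=
  ∑ j : Fin d, i (Fin.castSucc j) * θ (Fin.castSucc j)

/-- The argument of the monomial of `S̄` attached to the step `i`, at `e^{iθ}`; the sign of the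
last term reflects the inversion of the last variable in `S̄`. -/
def phase (d : ℕ) (i : Fin (d + 1) → ℤ) (θ : Fin (d + 1) → ℝ) : ℝ :=
  phaseHat d i θ - i (Fin.last d) * θ (Fin.last d)

theorem box_zero_eq_ball (δ : ℝ) : box d (fun _ => 0) δ = Metric.ball 0 δ := by
  ext θ
  by_cases hδ : 0 < δ
  · simp [box, argOf, ball_pi _ hδ, Real.ball_eq_Ioo]
  · simp only [box, argOf, Metric.ball_eq_empty.2 (not_lt.1 hδ), Set.mem_empty_iff_false, iff_false]
    intro hθ
    have hmem := hθ 0 trivial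
    linarith [hmem.1, hmem.2]

theorem zOf_castSucc (ε : ℝ) (θ : Fin (d + 1) → ℝ) (j : Fin d) :
    zOf d ε θ (Fin.castSucc j) = Complex.exp (Complex.I * θ (Fin.castSucc j)) := by
  simp [zOf, (Fin.castSucc_lt_last j).ne]

theorem zOf_last (ε : ℝ) (θ : Fin (d + 1) → ℝ) :
    zOf d ε θ (Fin.last d) = (1 - ε : ℂ) * Complex.exp (Complex.I * θ (Fin.last d)) := by
  simp [zOf]

theorem zOf_zero_radius (θ : Fin (d + 1) → ℝ) :
    zOf d 0 θ = fun j => Complex.exp (Complex.I * θ j) := by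
  funext j
  simp [zOf]

theorem zOf_ne_zero {ε : ℝ} (hε : ε ≠ 1) (θ : Fin (d + 1) → ℝ) (j : Fin (d + 1)) :
    zOf d ε θ j ≠ 0 := by
  have hradius : (1 - ε : ℂ) ≠ 0 := sub_ne_zero.2 (by exact_mod_cast hε.symm)
  unfold zOf
  split_ifs <;> simp [hradius]

theorem continuous_zOf (ε : ℝ) : Continuous (zOf d ε) := by
  unfold zOf
  fun_prop

theorem prod_zOf_zpow (ε : ℝ) (θ : Fin (d + 1) → ℝ) (i : Fin (d + 1) → ℤ) :
    ∏ j : Fin d, zOf d ε θ (Fin.castSucc j) ^ i (Fin.castSucc j) =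
      Complex.exp (Complex.I * phaseHat d i θ) := by
  simp only [zOf_castSucc, phaseHat, ← Complex.exp_int_mul, ← Complex.exp_sum,
    Complex.ofReal_sum, Complex.ofReal_mul, Complex.ofReal_intCast, Finset.mul_sum,
    mul_left_comm Complex.I]

theorem zOf_last_zpow {ε : ℝ} (hε : ε < 1) (θ : Fin (d + 1) → ℝ) (m : ℤ) :
    zOf d ε θ (Fin.last d) ^ m =
      Complex.exp (m * Real.log (1 - ε) + Complex.I * (m * θ (Fin.last d))) := by
  have hradius : (1 - ε : ℂ) = Complex.exp (Real.log (1 - ε)) := by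
    rw [← Complex.ofReal_exp, Real.exp_log (sub_pos.2 hε)]
    push_cast
    rfl
  rw [zOf_last, hradius, ← Complex.exp_add, ← Complex.exp_int_mul]
  congr 1
  ring

theorem SbarC_zOf {ε : ℝ} (hε : ε < 1) (θ : Fin (d + 1) → ℝ) :
    SbarC d S w (zOf d ε θ) = ∑ i ∈ S, (w i : ℂ) *
      Complex.exp (-(i (Fin.last d)) * Real.log (1 - ε) + Complex.I * phase d i θ) := by
  refine Finset.sum_congr rfl fun i _ => ?_
  rw [prod_zOf_zpow, zOf_last_zpow hε, mul_assoc, ← Complex.exp_add, phase]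
  congr 2
  push_cast
  ring

end Parametrization

section Symmetry

theorem _root_.SymmetricAxis.sum_mul_coord_eq_zero {D : ℕ} {T : Finset (Fin D → ℤ)}
    {v : (Fin D → ℤ) → ℝ} {k : Fin D} (h : SymmetricAxis D T v k) :
    ∑ i ∈ T, v i * (i k : ℝ) = 0 := by
  have hreflect : ∑ i ∈ T, v i * (i k : ℝ) = ∑ i ∈ T, -(v i * (i k : ℝ)) := by
    refine Finset.sum_nbij' (fun i => Function.update i k (-(i k)))
      (fun i => Function.update i k (-(i k))) (fun i hi => (h i hi).1) (fun i hi => (h i hi).1)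
      (fun i _ => by simp) (fun i _ => by simp) fun i hi => ?_
    simp [(h i hi).2]
  rw [Finset.sum_neg_distrib] at hreflect
  linarith

theorem _root_.SymmetricAxis.filter_apply_eq {D : ℕ} {T : Finset (Fin D → ℤ)}
    {v : (Fin D → ℤ) → ℝ} {k m : Fin D} (h : SymmetricAxis D T v k) (hm : m ≠ k) (c : ℤ) :
    SymmetricAxis D (T.filter fun i => i m = c) v k := fun i hi => by
  obtain ⟨hiT, him⟩ := Finset.mem_filter.1 hi
  exact ⟨Finset.mem_filter.2 ⟨(h i hiT).1, by rwa [Function.update_of_ne hm]⟩, (h i hiT).2⟩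

theorem sum_mul_phaseHat_eq_zero (hsym : ∀ k : Fin d, SymmetricAxis (d + 1) S w (Fin.castSucc k))
    (θ : Fin (d + 1) → ℝ) : ∑ i ∈ S, w i * phaseHat d i θ = 0 := by
  simp only [phaseHat, Finset.mul_sum, ← mul_assoc]
  rw [Finset.sum_comm]
  simp only [← Finset.sum_mul, (hsym _).sum_mul_coord_eq_zero, zero_mul, Finset.sum_const_zero]

theorem sum_mul_phase_eq_zero (hsym : ∀ k : Fin d, SymmetricAxis (d + 1) S w (Fin.castSucc k))
    (hdrift : ∑ i ∈ S, w i * (i (Fin.last d) : ℝ) = 0) (θ : Fin (d + 1) → ℝ) :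
    ∑ i ∈ S, w i * phase d i θ = 0 := by
  simp only [phase, mul_sub, ← mul_assoc, Finset.sum_sub_distrib, ← Finset.sum_mul, hdrift,
    sum_mul_phaseHat_eq_zero hsym, zero_mul, sub_zero]

theorem sum_mul_last_eq_zero
    (hstep : ∀ i ∈ S, i (Fin.last d) = -1 ∨ i (Fin.last d) = 0 ∨ i (Fin.last d) = 1)
    (hzero : ∑ i ∈ S with i (Fin.last d) = -1, w i = ∑ i ∈ S with i (Fin.last d) = 1, w i) :
    ∑ i ∈ S, w i * (i (Fin.last d) : ℝ) = 0 := by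
  have hsplit : ∀ i ∈ S, w i * (i (Fin.last d) : ℝ) =
      (if i (Fin.last d) = 1 then w i else 0) - if i (Fin.last d) = -1 then w i else 0 := by
    intro i hi
    rcases hstep i hi with h | h | h <;> simp [h]
  rw [Finset.sum_congr rfl hsplit, Finset.sum_sub_distrib, ← Finset.sum_filter,
    ← Finset.sum_filter, hzero, sub_self]

end Symmetry

section UniformAsymptotics

variable {X : Type*} {l : Filter X} {ε δ : X → ℝ} {θ : X → Fin (d + 1) → ℝ}

/-- The second-order Taylor polynomial of `S̄(e^{iθ})` at `θ = 0`, its linear term being zero. -/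
def quadraticKernel (d : ℕ) (S : Finset (Fin (d + 1) → ℤ)) (w : (Fin (d + 1) → ℤ) → ℝ)
    (θ : Fin (d + 1) → ℝ) : ℝ :=
  ∑ i ∈ S, w i * (1 - phase d i θ ^ 2 / 2)

theorem continuous_quadraticKernel : Continuous (quadraticKernel d S w) := by
  unfold quadraticKernel phase phaseHat
  fun_prop

theorem quadraticKernel_zero : quadraticKernel d S w 0 = S1 d S w := by
  simp [quadraticKernel, phase, phaseHat, S1]

theorem I_mul_phaseHat_isBigO (hθ : θ =O[l] δ) (i : Fin (d + 1) → ℤ) :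
    (fun x => Complex.I * phaseHat d i (θ x)) =O[l] δ := by
  refine (Complex.isBigO_ofReal_left.2 ?_).const_mul_left _
  exact .fun_sum fun j _ => (isBigO_pi.1 hθ _).const_mul_left _

theorem I_mul_phase_isBigO (hθ : θ =O[l] δ) (i : Fin (d + 1) → ℤ) :
    (fun x => Complex.I * phase d i (θ x)) =O[l] δ := by
  have hlast : (fun x => Complex.I * (i (Fin.last d) * θ x (Fin.last d))) =O[l] δ :=
    ((Complex.isBigO_ofReal_left.2 (isBigO_pi.1 hθ _)).const_mul_left _).const_mul_left _
  refine ((I_mul_phaseHat_isBigO hθ i).sub hlast).congr_left fun x => ?_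
  simp only [phase, Complex.ofReal_sub, Complex.ofReal_mul, Complex.ofReal_intCast, mul_sub]

theorem log_one_sub_isBigO (hε : Tendsto ε l (𝓝 0)) :
    (fun x => Real.log (1 - ε x)) =O[l] ε := by
  have hderiv : HasDerivAt (fun t : ℝ => Real.log (1 - t)) (-1 / (1 - 0)) 0 :=
    ((hasDerivAt_id (0 : ℝ)).const_sub 1).log (by norm_num)
  simpa [Function.comp_def] using hderiv.isBigO_sub.comp_tendsto hε

theorem SbarC_zOf_sub_quadraticKernel_isLittleO {g : X → ℝ}
    (hsym : ∀ k : Fin d, SymmetricAxis (d + 1) S w (Fin.castSucc k))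
    (hdrift : ∑ i ∈ S, w i * (i (Fin.last d) : ℝ) = 0)
    (hε : Tendsto ε l (𝓝 0)) (hδ : Tendsto δ l (𝓝 0)) (hθ : θ =O[l] δ)
    (hεε : (fun x => ε x ^ 2) =o[l] g) (hεδ : (fun x => ε x * δ x) =o[l] g)
    (hδδ : (fun x => δ x ^ 3) =o[l] g) :
    (fun x => SbarC d S w (zOf d (ε x) (θ x)) - quadraticKernel d S w (θ x)) =o[l] g := by
  have hlin : ∀ x, ∑ i ∈ S, (w i : ℂ) *
      (-(i (Fin.last d)) * Real.log (1 - ε x) + Complex.I * phase d i (θ x)) = 0 := fun x => by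
    have hphase := congrArg Complex.ofReal (sum_mul_phase_eq_zero hsym hdrift (θ x))
    have hlast := congrArg Complex.ofReal hdrift
    push_cast at hphase hlast
    simp only [mul_add, neg_mul, mul_neg, Finset.sum_add_distrib, Finset.sum_neg_distrib,
      ← mul_assoc, ← Finset.sum_mul, hlast, mul_right_comm _ Complex.I, hphase, zero_mul,
      neg_zero, add_zero]
  have hlog : ∀ i : Fin (d + 1) → ℤ,
      (fun x => (-(i (Fin.last d)) * Real.log (1 - ε x) : ℂ)) =O[l] ε := fun i =>
    (Complex.isBigO_ofReal_left.2 (log_one_sub_isBigO hε)).const_mul_left _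
  refine (sum_mul_exp_add_sub_isLittleO hε hδ (fun i _ => hlog i)
    (fun i _ => I_mul_phase_isBigO hθ i) hεε hεδ hδδ hlin).congr' ?_ .rfl
  filter_upwards [hε.eventually_lt_const one_pos] with x hx
  rw [SbarC_zOf hx, quadraticKernel]
  push_cast
  simp only [mul_pow, Complex.I_sq, neg_one_mul, neg_div, sub_eq_add_neg]

theorem SbarC_zOf_pow_isEquivalent {k : X → ℕ} (hS : S1 d S w ≠ 0)
    (hsym : ∀ k : Fin d, SymmetricAxis (d + 1) S w (Fin.castSucc k))
    (hdrift : ∑ i ∈ S, w i * (i (Fin.last d) : ℝ) = 0)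
    (hε : Tendsto ε l (𝓝 0)) (hδ : Tendsto δ l (𝓝 0)) (hθ : θ =O[l] δ)
    (hεε : (fun x => ε x ^ 2) =o[l] fun x => (k x : ℝ)⁻¹)
    (hεδ : (fun x => ε x * δ x) =o[l] fun x => (k x : ℝ)⁻¹)
    (hδδ : (fun x => δ x ^ 3) =o[l] fun x => (k x : ℝ)⁻¹) :
    (fun x => SbarC d S w (zOf d (ε x) (θ x)) ^ k x) ~[l]
      fun x => (quadraticKernel d S w (θ x) : ℂ) ^ k x := by
  have hlim : Tendsto (fun x => (quadraticKernel d S w (θ x) : ℂ)) l (𝓝 (S1 d S w)) := by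
    rw [← quadraticKernel_zero]
    exact ((Complex.continuous_ofReal.comp continuous_quadraticKernel).tendsto 0).comp
      (hθ.trans_tendsto hδ)
  exact isEquivalent_pow_of_sub_isLittleO (by exact_mod_cast hS) hlim
    (SbarC_zOf_sub_quadraticKernel_isLittleO hsym hdrift hε hδ hθ hεε hεδ hδδ)

end UniformAsymptotics

section Amplitude

variable {X : Type*} {l : Filter X} {ε δ : X → ℝ} {θ : X → Fin (d + 1) → ℝ}

/-- The factor of the residue integrand in front of `S̄(z)^n`, Jacobian included, without the
constant `I ^ (d + 1)`. -/
def amplitude (d : ℕ) (S : Finset (Fin (d + 1) → ℤ)) (w : (Fin (d + 1) → ℤ) → ℝ)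
    (z : Fin (d + 1) → ℂ) : ℂ :=
  (∏ j : Fin d, (1 + z (Fin.castSucc j))) *
    ((BC d S w z - z (Fin.last d) ^ 2 * AC d S w z) / (BC d S w z * (1 - z (Fin.last d))))

theorem amplitude_eq {z : Fin (d + 1) → ℂ} (hz : 1 - z (Fin.last d) ≠ 0) :
    amplitude d S w z = (∏ j : Fin d, (1 + z (Fin.castSucc j))) *
      (((BC d S w z - AC d S w z) / (1 - z (Fin.last d)) +
        (1 + z (Fin.last d)) * AC d S w z) / BC d S w z) := by
  rw [amplitude, mul_comm (BC d S w z), ← div_div]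
  congr 2
  field_simp
  ring

theorem resIntegrand_eq (n : ℕ) {ε : ℝ} (hε : ε ≠ 1) (θ : Fin (d + 1) → ℝ) :
    resIntegrand d S w n ε θ =
      Complex.I ^ (d + 1) * (amplitude d S w (zOf d ε θ) * SbarC d S w (zOf d ε θ) ^ n) := by
  have hz : ∏ j, zOf d ε θ j ≠ 0 := Finset.prod_ne_zero_iff.2 fun j _ => zOf_ne_zero hε θ j
  rw [resIntegrand, amplitude, Finset.prod_mul_distrib, Finset.prod_const, Finset.card_univ,
    Fintype.card_fin, div_mul_div_comm, mul_div_assoc', mul_right_comm (BC d S w _),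
    ← mul_div_mul_right _ (BC d S w (zOf d ε θ) * (1 - zOf d ε θ (Fin.last d))) hz]
  ring

theorem tendsto_zOf (hε : Tendsto ε l (𝓝 0)) (hθ : Tendsto θ l (𝓝 0)) :
    Tendsto (fun x => zOf d (ε x) (θ x)) l (𝓝 1) := by
  have hcont : Continuous fun p : ℝ × (Fin (d + 1) → ℝ) => zOf d p.1 p.2 := by
    refine continuous_pi fun j => ?_
    unfold zOf
    split_ifs <;> fun_prop
  have hone : zOf d 0 0 = 1 := by simp [zOf_zero_radius, Pi.one_def]
  have hlim := (hcont.tendsto (0, 0)).comp (hε.prodMk_nhds hθ)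
  rwa [hone] at hlim

theorem sum_filter_last_zOf_sub_isBigO
    (hsym : ∀ k : Fin d, SymmetricAxis (d + 1) S w (Fin.castSucc k))
    (hδ : Tendsto δ l (𝓝 0)) (hθ : θ =O[l] δ) (c : ℤ) :
    (fun x => ∑ i ∈ S with i (Fin.last d) = c,
        (w i : ℂ) * ∏ j : Fin d, zOf d (ε x) (θ x) (Fin.castSucc j) ^ i (Fin.castSucc j) -
      ∑ i ∈ S with i (Fin.last d) = c, (w i : ℂ)) =O[l] fun x => δ x ^ 2 := by
  simp only [prod_zOf_zpow]
  refine sum_mul_exp_sub_sum_isBigO hδ (fun i _ => I_mul_phaseHat_isBigO hθ i) fun x => ?_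
  have hphase := congrArg Complex.ofReal (sum_mul_phaseHat_eq_zero
    (fun k => (hsym k).filter_apply_eq (Fin.castSucc_lt_last k).ne' c) (θ x))
  push_cast at hphase
  simp only [mul_left_comm _ Complex.I, ← Finset.mul_sum, hphase, mul_zero]

theorem isBigO_one_sub_zOf_last (hε : Tendsto ε l (𝓝 0)) :
    ε =O[l] fun x => 1 - zOf d (ε x) (θ x) (Fin.last d) := by
  refine .of_bound' ?_
  filter_upwards [hε.eventually_lt_const one_pos] with x hx
  have hnorm : ‖zOf d (ε x) (θ x) (Fin.last d)‖ = 1 - ε x := by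
    rw [zOf_last, norm_mul, Complex.norm_exp_I_mul_ofReal, mul_one, ← Complex.ofReal_one,
      ← Complex.ofReal_sub, Complex.norm_real, Real.norm_of_nonneg (sub_pos.2 hx).le]
  calc ‖ε x‖ = |‖(1 : ℂ)‖ - ‖zOf d (ε x) (θ x) (Fin.last d)‖| := by
        rw [hnorm, norm_one, sub_sub_cancel, Real.norm_eq_abs]
    _ ≤ ‖1 - zOf d (ε x) (θ x) (Fin.last d)‖ := abs_norm_sub_norm_le _ _

theorem tendsto_BC_sub_AC_div
    (hsym : ∀ k : Fin d, SymmetricAxis (d + 1) S w (Fin.castSucc k))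
    (hzero : ∑ i ∈ S with i (Fin.last d) = -1, w i = ∑ i ∈ S with i (Fin.last d) = 1, w i)
    (hε : Tendsto ε l (𝓝 0)) (hδ : Tendsto δ l (𝓝 0)) (hθ : θ =O[l] δ)
    (hδε : (fun x => δ x ^ 2) =o[l] ε) :
    Tendsto (fun x => (BC d S w (zOf d (ε x) (θ x)) - AC d S w (zOf d (ε x) (θ x))) /
      (1 - zOf d (ε x) (θ x) (Fin.last d))) l (𝓝 0) := by
  have hzeroC : ∑ i ∈ S with i (Fin.last d) = -1, (w i : ℂ) =
      ∑ i ∈ S with i (Fin.last d) = 1, (w i : ℂ) := by exact_mod_cast hzero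
  have hBA : (fun x => BC d S w (zOf d (ε x) (θ x)) - AC d S w (zOf d (ε x) (θ x))) =O[l]
      fun x => δ x ^ 2 := by
    refine ((sum_filter_last_zOf_sub_isBigO (ε := ε) hsym hδ hθ 1).sub
      (sum_filter_last_zOf_sub_isBigO (ε := ε) hsym hδ hθ (-1))).congr_left fun x => ?_
    rw [hzeroC, sub_sub_sub_cancel_right]
    rfl
  exact ((hBA.trans_isLittleO hδε).trans_isBigO (isBigO_one_sub_zOf_last hε)).tendsto_div_nhds_zero

theorem tendsto_amplitude_zOf
    (hsym : ∀ k : Fin d, SymmetricAxis (d + 1) S w (Fin.castSucc k))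
    (hzero : ∑ i ∈ S with i (Fin.last d) = -1, w i = ∑ i ∈ S with i (Fin.last d) = 1, w i)
    (hB : ∑ i ∈ S with i (Fin.last d) = 1, w i ≠ 0)
    (hε : Tendsto ε l (𝓝 0)) (hδ : Tendsto δ l (𝓝 0)) (hθ : θ =O[l] δ)
    (hδ0 : ∀ᶠ x in l, δ x ≠ 0) (hδε : (fun x => δ x ^ 2) =o[l] ε) :
    Tendsto (fun x => amplitude d S w (zOf d (ε x) (θ x))) l (𝓝 (2 ^ (d + 1))) := by
  obtain ⟨b, hb⟩ : ∃ b : ℂ, b = ∑ i ∈ S with i (Fin.last d) = 1, (w i : ℂ) := ⟨_, rfl⟩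
  have hb' : b = ∑ i ∈ S with i (Fin.last d) = -1, (w i : ℂ) :=
    hb.trans (by exact_mod_cast hzero.symm)
  have hb0 : b ≠ 0 := by rw [hb]; exact_mod_cast hB
  have hδ2 : Tendsto (fun x => δ x ^ 2) l (𝓝 0) := by simpa using hδ.pow 2
  have hA_lim : Tendsto (fun x => AC d S w (zOf d (ε x) (θ x))) l (𝓝 b) :=
    hb' ▸ tendsto_sub_nhds_zero_iff.1
      ((sum_filter_last_zOf_sub_isBigO hsym hδ hθ (-1)).trans_tendsto hδ2)
  have hB_lim : Tendsto (fun x => BC d S w (zOf d (ε x) (θ x))) l (𝓝 b) :=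
    hb ▸ tendsto_sub_nhds_zero_iff.1
      ((sum_filter_last_zOf_sub_isBigO hsym hδ hθ 1).trans_tendsto hδ2)
  have hz_lim := fun j => ((tendsto_pi_nhds.1 (tendsto_zOf hε (hθ.trans_tendsto hδ))) j).const_add 1
  have hquot_lim := tendsto_BC_sub_AC_div hsym hzero hε hδ hθ hδε
  have hlim := (tendsto_finsetProd univ fun (j : Fin d) _ => hz_lim j.castSucc).mul
    ((hquot_lim.add ((hz_lim (Fin.last d)).mul hA_lim)).div hB_lim hb0)
  have hval : (∏ j : Fin d, (1 + (1 : Fin (d + 1) → ℂ) j.castSucc)) *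
      ((0 + (1 + (1 : Fin (d + 1) → ℂ) (Fin.last d)) * b) / b) = 2 ^ (d + 1) := by
    simp [hb0, one_add_one_eq_two, pow_succ]
  refine hval ▸ hlim.congr' ?_
  filter_upwards [hδε.isBigO.eq_zero_imp, (isBigO_one_sub_zOf_last (θ := θ) hε).eq_zero_imp, hδ0]
    with x hεδ hzε hδx
  exact (amplitude_eq fun hz => hδx (pow_eq_zero_iff two_ne_zero |>.1 (hεδ (hzε hz)))).symm

theorem resIntegrand_isEquivalent {k : X → ℕ} (hS : S1 d S w ≠ 0)
    (hsym : ∀ k : Fin d, SymmetricAxis (d + 1) S w (Fin.castSucc k))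
    (hdrift : ∑ i ∈ S, w i * (i (Fin.last d) : ℝ) = 0)
    (hzero : ∑ i ∈ S with i (Fin.last d) = -1, w i = ∑ i ∈ S with i (Fin.last d) = 1, w i)
    (hB : ∑ i ∈ S with i (Fin.last d) = 1, w i ≠ 0)
    (hε : Tendsto ε l (𝓝 0)) (hδ : Tendsto δ l (𝓝 0)) (hθ : θ =O[l] δ)
    (hδ0 : ∀ᶠ x in l, δ x ≠ 0) (hδε : (fun x => δ x ^ 2) =o[l] ε)
    (hεε : (fun x => ε x ^ 2) =o[l] fun x => (k x : ℝ)⁻¹)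
    (hεδ : (fun x => ε x * δ x) =o[l] fun x => (k x : ℝ)⁻¹) :
    (fun x => ((2 * Complex.I) ^ (d + 1))⁻¹ * resIntegrand d S w (k x) (ε x) (θ x)) ~[l]
      fun x => (quadraticKernel d S w (θ x) : ℂ) ^ k x := by
  have hδδ : (fun x => δ x ^ 3) =o[l] fun x => (k x : ℝ)⁻¹ :=
    (hδε.mul_isBigO (isBigO_refl δ l)).trans hεδ
  have hamp : (fun x => ((2 : ℂ) ^ (d + 1))⁻¹ * amplitude d S w (zOf d (ε x) (θ x))) ~[l]
      fun _ => 1 := by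
    refine (isEquivalent_const_iff_tendsto one_ne_zero).2 ?_
    rw [← inv_mul_cancel₀ (pow_ne_zero (d + 1) (two_ne_zero (α := ℂ)))]
    exact (tendsto_amplitude_zOf hsym hzero hB hε hδ hθ hδ0 hδε).const_mul _
  refine ((hamp.mul (SbarC_zOf_pow_isEquivalent hS hsym hdrift hε hδ hθ hεε hεδ hδδ)).congr_left
    ?_).congr_right (.of_forall fun x => one_mul _)
  filter_upwards [hε.eventually_ne zero_ne_one] with x hx
  simp only [Pi.mul_apply, resIntegrand_eq _ hx, mul_pow, mul_inv, mul_assoc,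
    inv_mul_cancel_left₀ (pow_ne_zero (d + 1) Complex.I_ne_zero)]

end Amplitude

section Integrals

variable {l : Filter ℕ} {ε δ : ℕ → ℝ}

theorem measurable_SbarC_zOf (ε : ℝ) : Measurable fun θ => SbarC d S w (zOf d ε θ) := by
  have hz := measurable_pi_iff.1 (continuous_zOf (d := d) ε).measurable
  unfold SbarC
  fun_prop

theorem measurable_resIntegrand (n : ℕ) (ε : ℝ) : Measurable (resIntegrand d S w n ε) := by
  have hz := measurable_pi_iff.1 (continuous_zOf (d := d) ε).measurable
  unfold resIntegrand BC AC SbarC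
  fun_prop

theorem integrableOn_quadraticKernel_pow (n : ℕ) (δ : ℝ) :
    IntegrableOn (fun θ => (quadraticKernel d S w θ : ℂ) ^ n) (Metric.ball 0 δ) := by
  have hcont : Continuous fun θ => (quadraticKernel d S w θ : ℂ) ^ n :=
    (Complex.continuous_ofReal.comp continuous_quadraticKernel).pow n
  exact (hcont.continuousOn.integrableOn_compact (isCompact_closedBall 0 δ)).mono_set
    Metric.ball_subset_closedBall

theorem norm_setIntegral_quadraticKernel_pow (n : ℕ) {δ : ℝ}
    (hsign : ∀ θ ∈ Metric.ball 0 δ, 0 < quadraticKernel d S w θ / S1 d S w) :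
    ‖∫ θ in Metric.ball 0 δ, (quadraticKernel d S w θ : ℂ) ^ n‖ =
      ∫ θ in Metric.ball 0 δ, ‖(quadraticKernel d S w θ : ℂ) ^ n‖ := by
  by_cases hS : S1 d S w = 0
  · have hempty : Metric.ball (0 : Fin (d + 1) → ℝ) δ = ∅ :=
      Set.eq_empty_of_forall_notMem fun θ hθ => by simpa [hS] using hsign θ hθ
    simp [hempty]
  refine norm_integral_eq_integral_norm_of_eq_norm_smul
    (e := ((S1 d S w / |S1 d S w| : ℝ) : ℂ) ^ n) (by simp [hS]) ?_
  filter_upwards [ae_restrict_mem Metric.isOpen_ball.measurableSet] with θ hθ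
  have hpolar : quadraticKernel d S w θ =
      |quadraticKernel d S w θ| * (S1 d S w / |S1 d S w|) := by
    rw [mul_div_left_comm, ← abs_div, abs_of_pos (hsign θ hθ), mul_div_cancel₀ _ hS]
  rw [norm_pow, Complex.norm_real, Real.norm_eq_abs, Complex.real_smul, Complex.ofReal_pow,
    ← mul_pow, ← Complex.ofReal_mul, ← hpolar]

theorem setIntegral_quadraticKernel_pow_ne_zero (n : ℕ) {δ : ℝ} (hδ : 0 < δ)
    (hsign : ∀ θ ∈ Metric.ball 0 δ, 0 < quadraticKernel d S w θ / S1 d S w) :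
    ∫ θ in Metric.ball 0 δ, (quadraticKernel d S w θ : ℂ) ^ n ≠ 0 := by
  rw [← norm_pos_iff, norm_setIntegral_quadraticKernel_pow n hsign,
    setIntegral_pos_iff_support_of_nonneg_ae (.of_forall fun _ => norm_nonneg _)
      (integrableOn_quadraticKernel_pow n δ).norm]
  refine (Metric.isOpen_ball.measure_pos volume ⟨0, Metric.mem_ball_self hδ⟩).trans_le
    (measure_mono fun θ hθ => ⟨?_, hθ⟩)
  have hne : quadraticKernel d S w θ ≠ 0 := fun h => by simpa [h] using hsign θ hθ
  simpa using fun h => absurd h hne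

theorem eventually_quadraticKernel_div_pos (hS : S1 d S w ≠ 0) (hδ : Tendsto δ l (𝓝 0)) :
    ∀ᶠ n in l, ∀ θ ∈ Metric.ball 0 (δ n), 0 < quadraticKernel d S w θ / S1 d S w := by
  have hlim : Tendsto (fun θ => quadraticKernel d S w θ / S1 d S w) (𝓝 0) (𝓝 1) :=
    (continuous_quadraticKernel.div_const _).tendsto' 0 1
      (by rw [quadraticKernel_zero, div_self hS])
  have hangle : Tendsto (Prod.snd : ℕ × (Fin (d + 1) → ℝ) → _)
      (uniformlyOn l fun n => Metric.ball 0 (δ n)) (𝓝 0) :=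
    snd_isBigO_uniformlyOn_ball.trans_tendsto (hδ.comp tendsto_fst_uniformlyOn)
  exact eventually_uniformlyOn.1 ((hlim.comp hangle).eventually_const_lt one_pos)

theorem setIntegral_isEquivalent_quadraticKernel_pow {f : ℕ → (Fin (d + 1) → ℝ) → ℂ}
    (hS : S1 d S w ≠ 0) (hδ : Tendsto δ l (𝓝 0)) (hf : ∀ n, Measurable (f n))
    (hfr : (fun x => f x.1 x.2) ~[uniformlyOn l fun n => Metric.ball 0 (δ n)]
      fun x => (quadraticKernel d S w x.2 : ℂ) ^ x.1) :
    (fun n => ∫ θ in Metric.ball 0 (δ n), f n θ) ~[l]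
      fun n => ∫ θ in Metric.ball 0 (δ n), (quadraticKernel d S w θ : ℂ) ^ n := by
  refine isEquivalent_setIntegral (fun n => Metric.isOpen_ball.measurableSet)
    (fun n => (hf n).aestronglyMeasurable) (fun n => integrableOn_quadraticKernel_pow n (δ n))
    (.of_bound' ?_) hfr
  filter_upwards [eventually_quadraticKernel_div_pos hS hδ] with n hn
  rw [norm_setIntegral_quadraticKernel_pow n hn,
    Real.norm_of_nonneg (integral_nonneg fun _ => norm_nonneg _)]

theorem setIntegral_resIntegrand_isEquivalent (hS : S1 d S w ≠ 0)
    (hsym : ∀ k : Fin d, SymmetricAxis (d + 1) S w (Fin.castSucc k))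
    (hdrift : ∑ i ∈ S, w i * (i (Fin.last d) : ℝ) = 0)
    (hzero : ∑ i ∈ S with i (Fin.last d) = -1, w i = ∑ i ∈ S with i (Fin.last d) = 1, w i)
    (hB : ∑ i ∈ S with i (Fin.last d) = 1, w i ≠ 0)
    (hε : Tendsto ε l (𝓝 0)) (hδ : Tendsto δ l (𝓝 0)) (hδ0 : ∀ᶠ n in l, δ n ≠ 0)
    (hδε : (fun n => δ n ^ 2) =o[l] ε)
    (hεε : (fun n => ε n ^ 2) =o[l] fun n : ℕ => (n : ℝ)⁻¹)
    (hεδ : (fun n => ε n * δ n) =o[l] fun n : ℕ => (n : ℝ)⁻¹) :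
    (fun n => ∫ θ in Metric.ball 0 (δ n),
        ((2 * Complex.I) ^ (d + 1))⁻¹ * resIntegrand d S w n (ε n) θ) ~[l]
      fun n => ∫ θ in Metric.ball 0 (δ n), (quadraticKernel d S w θ : ℂ) ^ n :=
  setIntegral_isEquivalent_quadraticKernel_pow hS hδ
    (fun n => (measurable_resIntegrand n (ε n)).const_mul _)
    (resIntegrand_isEquivalent hS hsym hdrift hzero hB (hε.comp tendsto_fst_uniformlyOn)
      (hδ.comp tendsto_fst_uniformlyOn) snd_isBigO_uniformlyOn_ball
      (tendsto_fst_uniformlyOn.eventually hδ0) (hδε.comp_tendsto tendsto_fst_uniformlyOn)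
      (hεε.comp_tendsto tendsto_fst_uniformlyOn) (hεδ.comp_tendsto tendsto_fst_uniformlyOn))

theorem setIntegral_SbarC_pow_isEquivalent (hS : S1 d S w ≠ 0)
    (hsym : ∀ k : Fin d, SymmetricAxis (d + 1) S w (Fin.castSucc k))
    (hdrift : ∑ i ∈ S, w i * (i (Fin.last d) : ℝ) = 0) (hδ : Tendsto δ l (𝓝 0))
    (hδδ : (fun n => δ n ^ 3) =o[l] fun n : ℕ => (n : ℝ)⁻¹) :
    (fun n => ∫ θ in Metric.ball 0 (δ n), SbarC d S w (zOf d 0 θ) ^ n) ~[l]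
      fun n => ∫ θ in Metric.ball 0 (δ n), (quadraticKernel d S w θ : ℂ) ^ n := by
  refine setIntegral_isEquivalent_quadraticKernel_pow hS hδ
    (fun n => (measurable_SbarC_zOf 0).pow_const n) ?_
  refine SbarC_zOf_pow_isEquivalent hS hsym hdrift tendsto_const_nhds
    (hδ.comp tendsto_fst_uniformlyOn) snd_isBigO_uniformlyOn_ball ?_ ?_
    (hδδ.comp_tendsto tendsto_fst_uniformlyOn)
  · simp
  · simp

theorem eventually_setIntegral_SbarC_pow_ne_zero (hS : S1 d S w ≠ 0)
    (hsym : ∀ k : Fin d, SymmetricAxis (d + 1) S w (Fin.castSucc k))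
    (hdrift : ∑ i ∈ S, w i * (i (Fin.last d) : ℝ) = 0) (hδ : Tendsto δ l (𝓝 0))
    (hδ0 : ∀ᶠ n in l, 0 < δ n) (hδδ : (fun n => δ n ^ 3) =o[l] fun n : ℕ => (n : ℝ)⁻¹) :
    ∀ᶠ n in l, ∫ θ in Metric.ball 0 (δ n), SbarC d S w (zOf d 0 θ) ^ n ≠ 0 := by
  filter_upwards [hδ0, eventually_quadraticKernel_div_pos hS hδ,
    (setIntegral_SbarC_pow_isEquivalent hS hsym hdrift hδ hδδ).isBigO_symm.eq_zero_imp]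
    with n hδn hsign himp
  exact mt himp (setIntegral_quadraticKernel_pow_ne_zero n hδn hsign)

end Integrals

end ZeroDrift

theorem reduction_at_one_general
    (d : ℕ) (S : Finset (Fin (d + 1) → ℤ)) (w : (Fin (d + 1) → ℤ) → ℝ)
    (hS : ZeroDrift.S1 d S w ≠ 0)
    (hsym : ∀ k : Fin d, SymmetricAxis (d + 1) S w (Fin.castSucc k))
    (hdrift : ∑ i ∈ S, w i * (i (Fin.last d) : ℝ) = 0)
    (hzero : ∑ i ∈ S with i (Fin.last d) = -1, w i = ∑ i ∈ S with i (Fin.last d) = 1, w i)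
    (hB : ∑ i ∈ S with i (Fin.last d) = 1, w i ≠ 0)
    {ε δ : ℕ → ℝ} (hδ0 : ∀ᶠ n in atTop, 0 < δ n) (hδε : (fun n => δ n ^ 2) =o[atTop] ε)
    (hεε : (fun n => ε n ^ 2) =o[atTop] fun n : ℕ => (n : ℝ)⁻¹)
    (hεδ : (fun n => ε n * δ n) =o[atTop] fun n : ℕ => (n : ℝ)⁻¹) :
    Tendsto (fun n : ℕ =>
      (((2 * (π : ℂ) * Complex.I) ^ (d + 1))⁻¹ *
          ZeroDrift.resIntegral d S w n (ε n) (δ n) (fun _ => 0)) /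
        ((((π : ℝ) ^ (d + 1))⁻¹ : ℝ) •
          ∫ θ in ZeroDrift.box d (fun _ => 0) (δ n),
            ZeroDrift.SbarC d S w (fun j => Complex.exp (Complex.I * θ j)) ^ n))
      atTop (𝓝 1) := by
  have hε : Tendsto ε atTop (𝓝 0) :=
    tendsto_zero_of_sq_tendsto_zero (hεε.trans_tendsto tendsto_inv_atTop_nhds_zero_nat)
  have hδ : Tendsto δ atTop (𝓝 0) := tendsto_zero_of_sq_tendsto_zero (hδε.trans_tendsto hε)
  have hδδ : (fun n => δ n ^ 3) =o[atTop] fun n : ℕ => (n : ℝ)⁻¹ :=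
    (hδε.mul_isBigO (isBigO_refl δ atTop)).trans hεδ
  have hres := ZeroDrift.setIntegral_resIntegrand_isEquivalent hS hsym hdrift hzero hB hε hδ
    (hδ0.mono fun n => ne_of_gt) hδε hεε hεδ
  have hsaddle := ZeroDrift.setIntegral_SbarC_pow_isEquivalent hS hsym hdrift hδ hδδ
  have hsaddle_ne := ZeroDrift.eventually_setIntegral_SbarC_pow_ne_zero hS hsym hdrift hδ hδ0 hδδ
  refine ((isEquivalent_iff_tendsto_one hsaddle_ne).1 (hres.trans hsaddle.symm)).congr fun n => ?_
  have hconst : (2 * (π : ℂ) * Complex.I) ^ (d + 1) = π ^ (d + 1) * (2 * Complex.I) ^ (d + 1) := by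
    rw [← mul_pow]
    ring
  have hπ : ((π : ℂ) ^ (d + 1))⁻¹ ≠ 0 := by simp [Real.pi_ne_zero]
  simp only [Pi.div_apply, ZeroDrift.resIntegral, ZeroDrift.box_zero_eq_ball, integral_const_mul,
    Complex.real_smul, Complex.ofReal_inv, Complex.ofReal_pow, ZeroDrift.zOf_zero_radius]
  rw [hconst, mul_inv, mul_assoc, mul_div_mul_left _ _ hπ]

/-- Proposition (reduction at `w = 1`): the residue integral over `N_1` is
asymptotically equivalent to the saddle-point integral
`π^{-(d+1)} ∫_{(-δ,δ)^{d+1}} S̄(e^{iθ})^n dθ`. -/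
theorem reduction_at_one
    (d : ℕ) (S : Finset (Fin (d + 1) → ℤ)) (w : (Fin (d + 1) → ℤ) → ℝ)
    (hstep : ∀ i ∈ S, (∀ j, i j = -1 ∨ i j = 0 ∨ i j = 1) ∧ i ≠ 0)
    (hw : ∀ i ∈ S, 0 < w i)
    (hsym : ∀ k : Fin d, SymmetricAxis (d + 1) S w (Fin.castSucc k))
    (hfwd : ∀ k : Fin (d + 1), ∃ i ∈ S, i k = 1)
    (hbwd : ∀ k : Fin (d + 1), ∃ i ∈ S, i k = -1)
    (hzero : (∑ i ∈ S.filter fun i => i (Fin.last d) = -1, w i)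
        = ∑ i ∈ S.filter fun i => i (Fin.last d) = 1, w i)
    (α β : ℝ) (hα : 1 / 2 < α) (hαβ : α < 2 * β) (hsum : 1 < α + β)
    (hβ1 : 1 / 3 < β) (hβ2 : β < 1 / 2) :
    Tendsto (fun n : ℕ =>
      (((2 * (π : ℂ) * Complex.I) ^ (d + 1))⁻¹ *
          ZeroDrift.resIntegral d S w n ((n : ℝ) ^ (-α)) ((n : ℝ) ^ (-β))
            (fun _ => 0)) /
        ((((π : ℝ) ^ (d + 1))⁻¹ : ℝ) •
          ∫ θ in ZeroDrift.box d (fun _ => 0) ((n : ℝ) ^ (-β)),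
            ZeroDrift.SbarC d S w (fun j => Complex.exp (Complex.I * θ j)) ^ n))
      atTop (nhds 1) := by
  obtain ⟨i, hi, hi_last⟩ := hfwd (Fin.last d)
  have hS : 0 < ∑ i ∈ S, w i := Finset.sum_pos hw ⟨i, hi⟩
  have hB : 0 < ∑ i ∈ S with i (Fin.last d) = 1, w i :=
    Finset.sum_pos (fun i hi => hw i (Finset.mem_filter.1 hi).1)
      ⟨i, Finset.mem_filter.2 ⟨hi, hi_last⟩⟩
  have hpow : ∀ {a b : ℝ}, 1 < a + b →
      (fun n : ℕ => (n : ℝ) ^ (-a) * (n : ℝ) ^ (-b)) =o[atTop] fun n : ℕ => (n : ℝ)⁻¹ := fun h => by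
    simpa only [Real.rpow_neg_one] using natCast_rpow_neg_mul_isLittleO h
  refine reduction_at_one_general d S w hS.ne' hsym
    (ZeroDrift.sum_mul_last_eq_zero (fun i hi => (hstep i hi).1 _) hzero) hzero hB.ne' ?_ ?_ ?_
    (hpow hsum)
  · filter_upwards [eventually_gt_atTop 0] with n hn
    positivity
  · simpa only [sq] using natCast_rpow_neg_mul_isLittleO (a := β) (b := β) (by linarith)
  · simpa only [sq] using hpow (a := α) (b := α) (by linarith)

end
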